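/- (Theorem 5.2, stated with q replaced by q^2 and a replaced by a^2 to avoid half-integer powers.) Let q, a be complex numbers with 0 < |q| < 1 and a^2 q^{2m} ≠ 1 for all m ≥ 1, and let k ≥ 2 and 1 ≤ i ≤ k be integers. Then the following three expressions are equal: (1) ((-a q^2; q^2)_∞ / (a^2 q^2; q^2)_∞) · ∑_{n=0}^{∞} (-1)^n a^{(2k-1)n} q^{2kn^2 + (2k-2i)n} (1 - a^{2i} q^{2i(2n+1)}) · (a^2 q^2; q^2)_n / (q^2;q^2)_n; (2) (-a q^2; q^2)_∞ · ∑_{s_1 ≥ ⋯ ≥ s_{k-1} ≥ 0} a^{2(s_1 + ⋯ + s_{k-1})} q^{2(s_1^2 + ⋯ + s_{k-1}^2) + 2(s_i + ⋯ + s_{k-1})} / [(q^2;q^2)_{s_1-s_2} ⋯ (q^2;q^2)_{s_{k-1}} (-a q^2; q^2)_{s_{k-1}}]; (3) ∑_{s_1 ≥ ⋯ ≥ s_{2k-2} ≥ 0} a^{s_1 + s_2 + ⋯ + s_{2k-2}} q^{s_1^2 + ⋯ + s_{2k-2}^2 + 2(s_{2i} + s_{2i+2} + ⋯ + s_{2k-2})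 + S} / [(q^2;q^2)_{s_1-s_2} (q^2;q^2)_{s_2-s_3} ⋯ (q^2;q^2)_{s_{2k-2}}], where S = s_1 - s_2 + s_3 - s_4 + ⋯ + s_{2k-3} - s_{2k-2}, the term 2(s_i + ⋯ + s_{k-1}) in (2) is empty when i = k, and the term 2(s_{2i} + s_{2i+2} + ⋯ + s_{2k-2}) in (3) is the sum over even indices from 2i to 2k-2. -/

import Mathlib

/-- The finite q-Pochhammer symbol `(x;q)_n = ∏_{j=0}^{n-1} (1 - x q^j)`. -/
noncomputable def qPoch (x q : ℂ) (n : ℕ) : ℂ := ∏ j ∈ Finset.range n, (1 - x * q ^ j)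

/-- The infinite q-Pochhammer symbol `(x;q)_∞ = ∏_{j=0}^{∞} (1 - x q^j)`. -/
noncomputable def qPochInf (x q : ℂ) : ℂ := ∏' j : ℕ, (1 - x * q ^ j)

/-!
Write `Q = q²`. The sequence `β_L = 1 / ((Q;Q)_L (-aQ;Q)_L)` is one side of a Bailey pair relative
to `a² Q`; by a Wilf–Zeilberger telescoping its other side is an explicit product. Take `k - i`
Bailey steps relative to `a² Q`, pass to a pair relative to `a²`, and take `i - 1` further steps.
As `L → ∞`, the relation between the two sides of the resulting pair becomes the equality of (1) and
(2): the chain of steps is the multisum, and the change of base produces the factors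
`1 - a^{2i} q^{2i(2n+1)}`.

For the equality of (2) and (3), the `q`-binomial theorem shows that a step with weight
`a^x q^{x² + x}` conjugates away a factor `(-aQ;Q)_x`. Hence every step with weight
`a^{2x} Q^{x²}` splits into two steps with weights `a^x q^{x² + x}` and `a^x q^{x² - x}`, at the
cost of moving the factor `(-aQ;Q)` from the innermost index to the outermost one, where in the
limit it becomes `(-aQ;Q)_∞`.
-/

section QPochhammer

open Finset

variable {x Q : ℂ}

lemma qPoch_zero (x Q : ℂ) : qPoch x Q 0 = 1 := prod_range_zero _

lemma qPoch_succ (x Q : ℂ) (n : ℕ) : qPoch x Q (n + 1) = qPoch x Q n * (1 - x * Q ^ n) :=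
  prod_range_succ _ n

lemma qPoch_add (x Q : ℂ) (m n : ℕ) :
    qPoch x Q (m + n) = qPoch x Q m * qPoch (x * Q ^ m) Q n := by
  simp only [qPoch, prod_range_add, pow_add, mul_assoc]

lemma qPoch_succ' (x Q : ℂ) (n : ℕ) : qPoch x Q (n + 1) = (1 - x) * qPoch (x * Q) Q n := by
  rw [add_comm, qPoch_add, qPoch_succ, qPoch_zero, one_mul, pow_zero, mul_one, pow_one]

lemma qPoch_ne_zero (h : ∀ j : ℕ, x * Q ^ j ≠ 1) (n : ℕ) : qPoch x Q n ≠ 0 :=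
  prod_ne_zero_iff.2 fun j _ => sub_ne_zero.2 (h j).symm

lemma one_sub_mul_pow_ne_zero (h : ∀ n, qPoch x Q n ≠ 0) (n : ℕ) : 1 - x * Q ^ n ≠ 0 :=
  right_ne_zero_of_mul (qPoch_succ x Q n ▸ h (n + 1))

lemma qPoch_mul_pow_ne_zero (h : ∀ n, qPoch x Q n ≠ 0) (m n : ℕ) : qPoch (x * Q ^ m) Q n ≠ 0 :=
  right_ne_zero_of_mul (qPoch_add x Q m n ▸ h (m + n))

lemma qPoch_neg_mul_ne_zero {a : ℂ} (h : ∀ n, qPoch (a ^ 2 * Q) Q n ≠ 0) :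
    ∀ n, qPoch (-(a * Q)) Q n ≠ 0 :=
  qPoch_ne_zero fun j hj => one_sub_mul_pow_ne_zero h (2 * j + 1) <| by
    linear_combination -(-(a * Q) * Q ^ j + 1) * hj

end QPochhammer

section Kernels

open Finset

variable {Q : ℂ}

/-- The kernel `1 / (Q;Q)_{L-m}` of one step of a Bailey chain. It is extended by zero to `m > L`,
so that a sum over decreasing tuples may be taken over all tuples. -/
noncomputable def stepKernel (Q : ℂ) (L m : ℕ) : ℂ :=
  if m ≤ L then (qPoch Q Q (L - m))⁻¹ else 0

lemma stepKernel_of_le {L m : ℕ} (h : m ≤ L) : stepKernel Q L m = (qPoch Q Q (L - m))⁻¹ :=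
  if_pos h

lemma stepKernel_of_lt {L m : ℕ} (h : L < m) : stepKernel Q L m = 0 :=
  if_neg h.not_ge

lemma stepKernel_zero_right (Q : ℂ) (L : ℕ) : stepKernel Q L 0 = (qPoch Q Q L)⁻¹ :=
  stepKernel_of_le L.zero_le

lemma stepKernel_add_add (Q : ℂ) (r L m : ℕ) :
    stepKernel Q (r + L) (r + m) = stepKernel Q L m := by
  simp only [stepKernel, add_le_add_iff_left, Nat.add_sub_add_left]

lemma stepKernel_add_left (Q : ℂ) (r d : ℕ) : stepKernel Q (r + d) r = (qPoch Q Q d)⁻¹ :=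
  (stepKernel_add_add Q r d 0).trans (stepKernel_zero_right Q d)

lemma stepKernel_succ_right (hQ : ∀ n, qPoch Q Q n ≠ 0) {L m : ℕ} (h : m ≤ L) :
    stepKernel Q L (m + 1) = (1 - Q ^ (L - m)) * stepKernel Q L m := by
  obtain ⟨d, rfl⟩ := Nat.exists_eq_add_of_le h
  rw [Nat.add_sub_cancel_left, stepKernel_add_left]
  cases d with
  | zero => rw [stepKernel_of_lt (by simp), pow_zero, sub_self, zero_mul]
  | succ d =>
    have hd := one_sub_mul_pow_ne_zero hQ d
    rw [← add_assoc, add_right_comm, stepKernel_add_left, qPoch_succ, mul_inv, pow_succ',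
      mul_left_comm, mul_inv_cancel₀ hd, mul_one]

lemma stepKernel_succ_left (hQ : ∀ n, qPoch Q Q n ≠ 0) {L m : ℕ} (h : m ≤ L + 1) :
    stepKernel Q L m = (1 - Q ^ (L + 1 - m)) * stepKernel Q (L + 1) m := by
  rw [← stepKernel_succ_right hQ h, add_comm L, add_comm m, stepKernel_add_add]

/-- The Gaussian binomial coefficient `(Q;Q)_N / ((Q;Q)_j (Q;Q)_{N-j})`, zero for `j > N`. -/
noncomputable def qBinom (Q : ℂ) (N j : ℕ) : ℂ :=
  qPoch Q Q N * stepKernel Q N j * (qPoch Q Q j)⁻¹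

lemma qBinom_zero_right (hQ : ∀ n, qPoch Q Q n ≠ 0) (N : ℕ) : qBinom Q N 0 = 1 := by
  rw [qBinom, stepKernel_zero_right, mul_inv_cancel₀ (hQ N), qPoch_zero, inv_one, one_mul]

lemma qBinom_of_lt {N j : ℕ} (h : N < j) : qBinom Q N j = 0 := by
  rw [qBinom, stepKernel_of_lt h, mul_zero, zero_mul]

lemma qBinom_succ_succ (hQ : ∀ n, qPoch Q Q n ≠ 0) {N j : ℕ} (h : j ≤ N) :
    qBinom Q (N + 1) (j + 1) = qBinom Q N (j + 1) + Q ^ (N - j) * qBinom Q N j := by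
  have hj := hQ j
  have hj' := one_sub_mul_pow_ne_zero hQ j
  have hshift : stepKernel Q (N + 1) (j + 1) = stepKernel Q N j := by
    rw [add_comm N, add_comm j, stepKernel_add_add]
  simp only [qBinom, hshift, stepKernel_succ_right hQ h, qPoch_succ]
  obtain ⟨d, rfl⟩ := Nat.exists_eq_add_of_le h
  rw [Nat.add_sub_cancel_left]
  field_simp
  ring

lemma sum_qBinom_succ_mul (hQ : ∀ n, qPoch Q Q n ≠ 0) (N : ℕ) (f : ℕ → ℂ) :
    ∑ j ∈ range (N + 2), qBinom Q (N + 1) j * f j =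
      ∑ j ∈ range (N + 1), qBinom Q N j * (f j + Q ^ (N - j) * f (j + 1)) := by
  have hpascal : ∀ j ∈ range (N + 1), qBinom Q (N + 1) (j + 1) * f (j + 1) =
      qBinom Q N (j + 1) * f (j + 1) + qBinom Q N j * (Q ^ (N - j) * f (j + 1)) := fun j hj => by
    rw [qBinom_succ_succ hQ (mem_range_succ_iff.1 hj)]
    ring
  have hshift : ∑ j ∈ range (N + 1), qBinom Q N (j + 1) * f (j + 1) + f 0 =
      ∑ j ∈ range (N + 1), qBinom Q N j * f j := by
    have h := sum_range_succ' (fun j => qBinom Q N j * f j) (N + 1)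
    rw [sum_range_succ, qBinom_of_lt N.lt_succ_self, zero_mul, add_zero, qBinom_zero_right hQ,
      one_mul] at h
    exact h.symm
  simp only [mul_add, sum_add_distrib]
  rw [sum_range_succ', sum_congr rfl hpascal, sum_add_distrib, qBinom_zero_right hQ, one_mul,
    add_right_comm, hshift]

/-- The `q`-binomial theorem at `Q = q ^ 2`, where the classical `Q ^ (j * (j + 1) / 2)` is
`q ^ (j ^ 2 + j)`. -/
lemma sum_qBinom_mul_pow {q : ℂ} (hq : ∀ n, qPoch (q ^ 2) (q ^ 2) n ≠ 0) (z : ℂ) (N : ℕ) :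
    ∑ j ∈ range (N + 1), qBinom (q ^ 2) N j * (z ^ j * q ^ (j ^ 2 + j)) =
      qPoch (-(z * q ^ 2)) (q ^ 2) N := by
  induction N with
  | zero => simp only [zero_add, sum_range_one, qBinom_zero_right hq, qPoch_zero]; simp
  | succ N ih =>
    rw [sum_qBinom_succ_mul hq, qPoch_succ, ← ih, sum_mul]
    refine sum_congr rfl fun j hj => ?_
    obtain ⟨d, rfl⟩ := Nat.exists_eq_add_of_le (mem_range_succ_iff.1 hj)
    rw [Nat.add_sub_cancel_left]
    ring

/-- The Durfee-square form of the `q`-Chu–Vandermonde sum. -/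
lemma sum_qBinom_mul_pow_sq_div_qPoch (hQ : ∀ n, qPoch Q Q n ≠ 0) (N : ℕ) {B : ℂ}
    (hB : ∀ n, qPoch (B * Q) Q n ≠ 0) :
    ∑ j ∈ range (N + 1), qBinom Q N j * (B ^ j * Q ^ j ^ 2 / qPoch (B * Q) Q j) =
      1 / qPoch (B * Q) Q N := by
  induction N generalizing B with
  | zero => simp only [zero_add, sum_range_one, qBinom_zero_right hQ, qPoch_zero]; simp
  | succ N ih =>
    have hBQ : ∀ n, qPoch (B * Q * Q) Q n ≠ 0 := by
      simpa only [pow_one] using qPoch_mul_pow_ne_zero hB 1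
    have h0 : 1 - B * Q ≠ 0 := by simpa only [pow_zero, mul_one] using one_sub_mul_pow_ne_zero hB 0
    have hstep : ∀ j ∈ range (N + 1),
        qBinom Q N j * (Q ^ (N - j) * (B ^ (j + 1) * Q ^ (j + 1) ^ 2 / qPoch (B * Q) Q (j + 1))) =
          B * Q ^ (N + 1) / (1 - B * Q) *
            (qBinom Q N j * ((B * Q) ^ j * Q ^ j ^ 2 / qPoch (B * Q * Q) Q j)) := fun j hj => by
      have := hBQ j
      obtain ⟨d, rfl⟩ := Nat.exists_eq_add_of_le (mem_range_succ_iff.1 hj)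
      rw [Nat.add_sub_cancel_left, qPoch_succ']
      field_simp
      ring
    have hN := hB N
    have hN' := one_sub_mul_pow_ne_zero hB N
    have hsplit : qPoch (B * Q * Q) Q N =
        qPoch (B * Q) Q N * (1 - B * Q * Q ^ N) / (1 - B * Q) := by
      rw [eq_div_iff h0, ← qPoch_succ, qPoch_succ', mul_comm]
    rw [sum_qBinom_succ_mul hQ]
    simp only [mul_add, sum_add_distrib]
    rw [sum_congr rfl hstep, ← mul_sum, ih hB, ih hBQ, hsplit, qPoch_succ]
    field_simp
    ring

/-- Trinomial revision, summed over the middle index. -/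
lemma sum_stepKernel_mul_stepKernel (hQ : ∀ n, qPoch Q Q n ≠ 0) (r N : ℕ) (f : ℕ → ℂ) :
    ∑ m ∈ range (r + N + 1), stepKernel Q (r + N) m * f m * stepKernel Q m r =
      stepKernel Q (r + N) r * ∑ j ∈ range (N + 1), qBinom Q N j * f (r + j) := by
  rw [add_assoc, sum_range_add, sum_eq_zero fun m hm => ?_, zero_add, mul_sum]
  · refine sum_congr rfl fun j _ => ?_
    have := hQ N
    rw [stepKernel_add_add, stepKernel_add_left, stepKernel_add_left, qBinom]
    field_simp
  · rw [stepKernel_of_lt (mem_range.1 hm), mul_zero]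

end Kernels

section BaileyPairs

open Finset

variable {Q A a : ℂ} {α β : ℕ → ℂ}

/-- The kernel `1 / ((Q;Q)_{L-r} (AQ;Q)_{L+r})` defining Bailey pairs relative to `A`, zero for
`r > L`. -/
noncomputable def pairKernel (Q A : ℂ) (L r : ℕ) : ℂ := stepKernel Q L r / qPoch (A * Q) Q (L + r)

lemma pairKernel_of_lt {L r : ℕ} (h : L < r) : pairKernel Q A L r = 0 := by
  rw [pairKernel, stepKernel_of_lt h, zero_div]

/-- A Bailey pair relative to `A`: `β_L = ∑_{r ≤ L} α_r / ((Q;Q)_{L-r} (AQ;Q)_{L+r})`. -/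
def IsBaileyPair (Q A : ℂ) (α β : ℕ → ℂ) : Prop :=
  ∀ L, β L = ∑ r ∈ range (L + 1), α r * pairKernel Q A L r

/-- One step of a Bailey chain with weight `v`: the sequence `L ↦ ∑_{m ≤ L} v_m β_m / (Q;Q)_{L-m}`.
-/
noncomputable def baileyStep (Q : ℂ) (v β : ℕ → ℂ) (L : ℕ) : ℂ :=
  ∑ m ∈ range (L + 1), stepKernel Q L m * v m * β m

lemma sum_stepKernel_mul_pairKernel (hQ : ∀ n, qPoch Q Q n ≠ 0) (hA : ∀ n, qPoch (A * Q) Q n ≠ 0)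
    (r L : ℕ) :
    ∑ m ∈ range (L + 1), stepKernel Q L m * (A ^ m * Q ^ m ^ 2) * pairKernel Q A m r =
      A ^ r * Q ^ r ^ 2 * pairKernel Q A L r := by
  obtain hlt | hle := lt_or_ge L r
  · rw [pairKernel_of_lt hlt, mul_zero]
    refine sum_eq_zero fun m hm => ?_
    rw [pairKernel_of_lt ((mem_range_succ_iff.1 hm).trans_lt hlt), mul_zero]
  obtain ⟨N, rfl⟩ := Nat.exists_eq_add_of_le hle
  have hadd : ∀ j, qPoch (A * Q) Q (r + j + r) =
      qPoch (A * Q) Q (2 * r) * qPoch (A * Q ^ (2 * r) * Q) Q j := fun j => by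
    rw [show r + j + r = 2 * r + j by ring, qPoch_add, mul_right_comm A]
  have hB : ∀ n, qPoch (A * Q ^ (2 * r) * Q) Q n ≠ 0 := by
    simpa only [mul_right_comm] using qPoch_mul_pow_ne_zero hA (2 * r)
  calc _ = ∑ m ∈ range (r + N + 1), stepKernel Q (r + N) m *
          (A ^ m * Q ^ m ^ 2 / qPoch (A * Q) Q (m + r)) * stepKernel Q m r :=
        sum_congr rfl fun m _ => by rw [pairKernel]; ring
    _ = A ^ r * Q ^ r ^ 2 * stepKernel Q (r + N) r / qPoch (A * Q) Q (2 * r) *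
          ∑ j ∈ range (N + 1), qBinom Q N j *
            ((A * Q ^ (2 * r)) ^ j * Q ^ j ^ 2 / qPoch (A * Q ^ (2 * r) * Q) Q j) := by
        rw [sum_stepKernel_mul_stepKernel hQ r N
          fun m => A ^ m * Q ^ m ^ 2 / qPoch (A * Q) Q (m + r), mul_sum, mul_sum]
        refine sum_congr rfl fun j _ => ?_
        rw [hadd]
        field_simp
        ring
    _ = A ^ r * Q ^ r ^ 2 * pairKernel Q A (r + N) r := by
        rw [sum_qBinom_mul_pow_sq_div_qPoch hQ N hB, pairKernel, hadd]
        field_simp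

namespace IsBaileyPair

lemma eq_sum_range_of_le (h : IsBaileyPair Q A α β) {m L : ℕ} (hm : m ≤ L) :
    β m = ∑ r ∈ range (L + 1), α r * pairKernel Q A m r := by
  rw [h m]
  refine sum_subset (range_subset_range.2 (Nat.succ_le_succ hm)) fun r _ hr => ?_
  rw [pairKernel_of_lt (by simpa using hr), mul_zero]

/-- Bailey's lemma, with both of its free parameters sent to infinity. -/
lemma baileyStep (h : IsBaileyPair Q A α β) (hQ : ∀ n, qPoch Q Q n ≠ 0)
    (hA : ∀ n, qPoch (A * Q) Q n ≠ 0) :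
    IsBaileyPair Q A (fun r => A ^ r * Q ^ r ^ 2 * α r)
      (baileyStep Q (fun m => A ^ m * Q ^ m ^ 2) β) := fun L => by
  calc _ = ∑ m ∈ range (L + 1), ∑ r ∈ range (L + 1),
          α r * (stepKernel Q L m * (A ^ m * Q ^ m ^ 2) * pairKernel Q A m r) := by
        refine sum_congr rfl fun m hm => ?_
        rw [h.eq_sum_range_of_le (mem_range_succ_iff.1 hm), mul_sum]
        exact sum_congr rfl fun r _ => by ring
    _ = _ := by
        rw [sum_comm]
        refine sum_congr rfl fun r _ => ?_
        rw [← mul_sum, sum_stepKernel_mul_pairKernel hQ hA]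
        ring

end IsBaileyPair

lemma pairKernel_mul_base (hQ : ∀ n, qPoch Q Q n ≠ 0) (hA : ∀ n, qPoch (A * Q) Q n ≠ 0)
    (r L : ℕ) :
    (1 - A * Q ^ (2 * r + 1)) / (1 - A * Q) * pairKernel Q (A * Q) L r =
      pairKernel Q A L r - A * Q ^ (2 * r + 1) * pairKernel Q A L (r + 1) := by
  obtain hlt | hle := lt_or_ge L r
  · rw [pairKernel_of_lt hlt, pairKernel_of_lt hlt, pairKernel_of_lt (hlt.trans r.lt_succ_self)]
    ring
  obtain ⟨d, rfl⟩ := Nat.exists_eq_add_of_le hle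
  have h0 : 1 - A * Q ≠ 0 := by simpa only [pow_zero, mul_one] using one_sub_mul_pow_ne_zero hA 0
  have hP := hA (r + d + r)
  have hlast := one_sub_mul_pow_ne_zero hA (r + d + r)
  have hbase : qPoch (A * Q * Q) Q (r + d + r) =
      qPoch (A * Q) Q (r + d + r) * (1 - A * Q * Q ^ (r + d + r)) / (1 - A * Q) := by
    rw [eq_div_iff h0, ← qPoch_succ, qPoch_succ', mul_comm]
  simp only [pairKernel, hbase, ← add_assoc, qPoch_succ, stepKernel_succ_right hQ hle,
    Nat.add_sub_cancel_left]
  field_simp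
  ring

/-- The sequence `γ_r - A Q^{2r-1} γ_{r-1}`, which turns a Bailey pair relative to `AQ` into one
relative to `A`. -/
noncomputable def lowerBase (Q A : ℂ) (γ : ℕ → ℂ) : ℕ → ℂ
  | 0 => γ 0
  | r + 1 => γ (r + 1) - A * Q ^ (2 * r + 1) * γ r

lemma IsBaileyPair.lowerBase {γ : ℕ → ℂ}
    (h : IsBaileyPair Q (A * Q) (fun r => (1 - A * Q ^ (2 * r + 1)) / (1 - A * Q) * γ r) β)
    (hQ : ∀ n, qPoch Q Q n ≠ 0) (hA : ∀ n, qPoch (A * Q) Q n ≠ 0) :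
    IsBaileyPair Q A (lowerBase Q A γ) β := fun L => by
  calc β L = ∑ r ∈ range (L + 1), γ r * pairKernel Q A L r -
          ∑ r ∈ range (L + 1), A * Q ^ (2 * r + 1) * γ r * pairKernel Q A L (r + 1) := by
        rw [h L, ← sum_sub_distrib]
        refine sum_congr rfl fun r _ => ?_
        rw [mul_right_comm, pairKernel_mul_base hQ hA]
        ring
    _ = _ := by
        rw [sum_range_succ', sum_range_succ (fun r => _ * pairKernel Q A L (r + 1)),
          pairKernel_of_lt L.lt_succ_self, mul_zero, add_zero, sum_range_succ', _root_.lowerBase,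
          add_sub_right_comm, ← sum_sub_distrib]
        simp only [_root_.lowerBase, sub_mul]

/-- Up to the factor `(1 - a² Q^{2r+1}) / (1 - a² Q)`, the `α`-side of the Bailey pair relative to
`a² Q` whose `β`-side is `1 / ((Q;Q)_L (-aQ;Q)_L)`. -/
noncomputable def seedCoeff (Q a : ℂ) (r : ℕ) : ℂ :=
  (-a) ^ r * Q ^ r ^ 2 * qPoch (a ^ 2 * Q) Q r / qPoch Q Q r

lemma seedCoeff_succ_mul (hQ : ∀ n, qPoch Q Q n ≠ 0) (a : ℂ) (r : ℕ) :
    (1 - Q * Q ^ r) * seedCoeff Q a (r + 1) =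
      -a * Q ^ (2 * r + 1) * (1 - a ^ 2 * Q * Q ^ r) * seedCoeff Q a r := by
  have hr := hQ r
  have hr' := one_sub_mul_pow_ne_zero hQ r
  simp only [seedCoeff, qPoch_succ]
  field_simp
  ring

/-- The `r`-th summand of the Bailey pair relation for `seedCoeff`, divided by the value
`1 / ((Q;Q)_n (-aQ;Q)_n)` of the sum. -/
noncomputable def seedTerm (Q a : ℂ) (n r : ℕ) : ℂ :=
  qPoch Q Q n * qPoch (-(a * Q)) Q n * seedCoeff Q a r *
    ((1 - a ^ 2 * Q ^ (2 * r + 1)) * stepKernel Q n r / qPoch (a ^ 2 * Q) Q (n + r + 1))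

/-- The Wilf–Zeilberger mate of `seedTerm`: its difference in `r` is the difference of `seedTerm` in
`n`. -/
noncomputable def seedCert (Q a : ℂ) (n r : ℕ) : ℂ :=
  -(qPoch Q Q n * qPoch (-(a * Q)) Q n * seedCoeff Q a r) *
    (Q ^ (n + 1 - r) * (1 - Q ^ r) * (1 + a * Q ^ r) * stepKernel Q (n + 1) r /
      qPoch (a ^ 2 * Q) Q (n + r + 1))

lemma seedTerm_succ_sub (hQ : ∀ n, qPoch Q Q n ≠ 0) (hA : ∀ n, qPoch (a ^ 2 * Q) Q n ≠ 0)
    {n r : ℕ} (h : r ≤ n + 1) :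
    seedTerm Q a (n + 1) r - seedTerm Q a n r = seedCert Q a n (r + 1) - seedCert Q a n r := by
  have hP := hA (n + r + 1)
  have hlast : 1 - a ^ 2 * Q * Q ^ (n + r + 1) ≠ 0 := one_sub_mul_pow_ne_zero hA _
  have hcert : seedCert Q a n (r + 1) =
      qPoch Q Q n * qPoch (-(a * Q)) Q n * seedCoeff Q a r *
        (a * Q ^ (2 * r) * (1 - a ^ 2 * Q * Q ^ r) * (1 + a * Q ^ (r + 1)) *
          (Q ^ (n + 1 - r) * (1 - Q ^ (n + 1 - r)) * stepKernel Q (n + 1) r) /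
          (qPoch (a ^ 2 * Q) Q (n + r + 1) * (1 - a ^ 2 * Q * Q ^ (n + r + 1)))) := by
    have hgap : Q ^ (n + 1 - r) * (1 - Q ^ (n + 1 - r)) =
        Q * Q ^ (n + 1 - (r + 1)) * (1 - Q ^ (n + 1 - r)) := by
      obtain hr | hr := h.eq_or_lt
      · simp only [hr, tsub_self, pow_zero, sub_self, mul_zero]
      · rw [← pow_succ', show n + 1 - (r + 1) + 1 = n + 1 - r by omega]
    rw [hgap, ← qPoch_succ, seedCert, stepKernel_succ_right hQ h, pow_succ' Q r]
    linear_combination -(qPoch Q Q n * qPoch (-(a * Q)) Q n * (Q ^ (n + 1 - (r + 1)) *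
      (1 + a * (Q * Q ^ r)) * ((1 - Q ^ (n + 1 - r)) * stepKernel Q (n + 1) r) /
        qPoch (a ^ 2 * Q) Q (n + r + 1 + 1))) * seedCoeff_succ_mul hQ a r
  rw [hcert, seedTerm, seedTerm, seedCert, stepKernel_succ_left hQ h, add_right_comm n 1 r,
    qPoch_succ _ _ (n + r + 1), qPoch_succ Q, qPoch_succ (-(a * Q))]
  obtain ⟨d, hd⟩ := Nat.exists_eq_add_of_le h
  have hQn : Q * Q ^ n = Q ^ r * Q ^ d := by rw [← pow_succ', hd, pow_add]
  have hQnr : Q ^ (n + r + 1) = Q ^ r * Q ^ r * Q ^ d := by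
    rw [add_right_comm, hd, ← pow_add, ← pow_add]; ring_nf
  rw [hQnr] at hlast ⊢
  rw [neg_mul, neg_mul, mul_assoc a Q, hQn, hd, Nat.add_sub_cancel_left]
  generalize hD : 1 - a ^ 2 * Q * (Q ^ r * Q ^ r * Q ^ d) = D at hlast ⊢
  field_simp
  rw [← hD]
  ring

lemma sum_seedTerm (hQ : ∀ n, qPoch Q Q n ≠ 0) (hA : ∀ n, qPoch (a ^ 2 * Q) Q n ≠ 0) (n : ℕ) :
    ∑ r ∈ range (n + 1), seedTerm Q a n r = 1 := by
  induction n with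
  | zero =>
    have h0 := one_sub_mul_pow_ne_zero hA 0
    simp_all [seedTerm, seedCoeff, stepKernel_zero_right, qPoch_zero, qPoch_succ]
  | succ n ih =>
    have htelescope : ∑ r ∈ range (n + 2), (seedTerm Q a (n + 1) r - seedTerm Q a n r) = 0 := by
      rw [sum_congr rfl fun r hr => seedTerm_succ_sub hQ hA (mem_range_succ_iff.1 hr),
        sum_range_sub]
      simp [seedCert, stepKernel_of_lt]
    have hlast : seedTerm Q a n (n + 1) = 0 := by simp [seedTerm, stepKernel_of_lt]
    rwa [sum_sub_distrib, sum_range_succ (seedTerm Q a n), ih, hlast, add_zero, sub_eq_zero]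
      at htelescope

lemma isBaileyPair_seed (hQ : ∀ n, qPoch Q Q n ≠ 0) (hA : ∀ n, qPoch (a ^ 2 * Q) Q n ≠ 0) :
    IsBaileyPair Q (a ^ 2 * Q)
      (fun r => (1 - a ^ 2 * Q ^ (2 * r + 1)) / (1 - a ^ 2 * Q) * seedCoeff Q a r)
      (fun L => (qPoch (-(a * Q)) Q L)⁻¹ / qPoch Q Q L) := fun L => by
  have hL := hQ L
  have haL := qPoch_neg_mul_ne_zero hA L
  calc _ = ∑ r ∈ range (L + 1), seedTerm Q a L r * ((qPoch (-(a * Q)) Q L)⁻¹ / qPoch Q Q L) := by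
        rw [← sum_mul, sum_seedTerm hQ hA, one_mul]
    _ = _ := by
        refine sum_congr rfl fun r _ => ?_
        simp only [seedTerm, pairKernel, qPoch_succ']
        field_simp

end BaileyPairs

section ChainSums

open Finset

variable {Q A q a : ℂ}

/-- The `N`-fold Bailey chain with weights `w 0, …, w (N - 1)`, the outermost step carrying
`w 0`, started from the sequence `g`. -/
noncomputable def chainSum (Q : ℂ) : ℕ → (ℕ → ℕ → ℂ) → (ℕ → ℂ) → ℕ → ℂ
  | 0, _, g => g
  | N + 1, w, g => baileyStep Q (w 0) (chainSum Q N (fun m => w (m + 1)) g)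

lemma IsBaileyPair.chainSum_const {α β : ℕ → ℂ} (h : IsBaileyPair Q A α β)
    (hQ : ∀ n, qPoch Q Q n ≠ 0) (hA : ∀ n, qPoch (A * Q) Q n ≠ 0) (N : ℕ) :
    IsBaileyPair Q A (fun r => (A ^ r * Q ^ r ^ 2) ^ N * α r)
      (chainSum Q N (fun _ x => A ^ x * Q ^ x ^ 2) β) := by
  induction N with
  | zero => simpa only [pow_zero, one_mul, chainSum] using h
  | succ N ih => simpa only [pow_succ' _ N, mul_assoc, chainSum] using ih.baileyStep hQ hA

/-- The extra factor `Q^x` carried by all but the first `p` steps of a chain. -/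
noncomputable def tailFactor (Q : ℂ) (p m x : ℕ) : ℂ := if m < p then 1 else Q ^ x

/-- The weights `A^x Q^{x²}` with the extra factor `tailFactor`: the first `p` steps are Bailey
steps relative to `A`, the later ones relative to `AQ`. -/
noncomputable def tailWeight (Q A : ℂ) (p m x : ℕ) : ℂ := A ^ x * Q ^ x ^ 2 * tailFactor Q p m x

lemma IsBaileyPair.chainSum_tailWeight {α β : ℕ → ℂ} {j : ℕ}
    (h : IsBaileyPair Q A α (chainSum Q j (fun _ x => (A * Q) ^ x * Q ^ x ^ 2) β))
    (hQ : ∀ n, qPoch Q Q n ≠ 0) (hA : ∀ n, qPoch (A * Q) Q n ≠ 0) (p : ℕ) :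
    IsBaileyPair Q A (fun r => (A ^ r * Q ^ r ^ 2) ^ p * α r)
      (chainSum Q (p + j) (tailWeight Q A p) β) := by
  induction p with
  | zero =>
    have hw : tailWeight Q A 0 = fun _ x => (A * Q) ^ x * Q ^ x ^ 2 := by
      funext m x
      rw [tailWeight, tailFactor, if_neg m.not_lt_zero]
      ring
    simpa only [pow_zero, one_mul, zero_add, hw] using h
  | succ p ih =>
    have hzero : tailWeight Q A (p + 1) 0 = fun x => A ^ x * Q ^ x ^ 2 := by
      funext x
      rw [tailWeight, tailFactor, if_pos p.succ_pos, mul_one]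
    have hsucc : (fun m => tailWeight Q A (p + 1) (m + 1)) = tailWeight Q A p := by
      funext m x
      simp only [tailWeight, tailFactor, add_lt_add_iff_right]
    rw [add_right_comm, chainSum, hzero, hsucc]
    simpa only [pow_succ' _ p, mul_assoc] using ih.baileyStep hQ hA

lemma baileyStep_baileyStep_mul_qPoch (hQ : ∀ n, qPoch (q ^ 2) (q ^ 2) n ≠ 0) (a : ℂ)
    (v β : ℕ → ℂ) (L : ℕ) :
    baileyStep (q ^ 2) (fun x => a ^ x * q ^ (x ^ 2 + x))
        (baileyStep (q ^ 2) v (fun x => qPoch (-(a * q ^ 2)) (q ^ 2) x * β x)) L =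
      qPoch (-(a * q ^ 2)) (q ^ 2) L *
        baileyStep (q ^ 2) (fun x => a ^ x * q ^ (x ^ 2 + x) * v x) β L := by
  set K := stepKernel (q ^ 2)
  set P := qPoch (-(a * q ^ 2)) (q ^ 2)
  have hinner : ∀ r ∈ range (L + 1),
      P r * ∑ m ∈ range (L + 1), K L m * (a ^ m * q ^ (m ^ 2 + m)) * K m r =
        P L * (K L r * (a ^ r * q ^ (r ^ 2 + r))) := fun r hr => by
    obtain ⟨N, rfl⟩ := Nat.exists_eq_add_of_le (mem_range_succ_iff.1 hr)
    have hexp : ∀ j, a ^ (r + j) * q ^ ((r + j) ^ 2 + (r + j)) =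
        a ^ r * q ^ (r ^ 2 + r) * ((a * (q ^ 2) ^ r) ^ j * q ^ (j ^ 2 + j)) := fun j => by ring
    have hP : P (r + N) = P r * qPoch (-(a * (q ^ 2) ^ r * q ^ 2)) (q ^ 2) N := by
      rw [← mul_right_comm, ← neg_mul]
      exact qPoch_add _ _ r N
    rw [sum_stepKernel_mul_stepKernel hQ r N fun m => a ^ m * q ^ (m ^ 2 + m), hP,
      ← sum_qBinom_mul_pow hQ]
    simp only [hexp, mul_left_comm _ (a ^ r * q ^ (r ^ 2 + r)), ← mul_sum]
    ring
  have hextend : ∀ m ∈ range (L + 1), baileyStep (q ^ 2) v (fun x => P x * β x) m =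
      ∑ r ∈ range (L + 1), K m r * v r * (P r * β r) := fun m hm => by
    refine sum_subset (range_subset_range.2 (mem_range.1 hm)) fun r _ hr => ?_
    rw [stepKernel_of_lt (by simpa using hr), zero_mul, zero_mul]
  calc _ = ∑ m ∈ range (L + 1), ∑ r ∈ range (L + 1),
          v r * β r * (P r * (K L m * (a ^ m * q ^ (m ^ 2 + m)) * K m r)) := by
        refine sum_congr rfl fun m hm => ?_
        rw [hextend m hm, mul_sum]
        exact sum_congr rfl fun r _ => by ring
    _ = _ := by
        rw [sum_comm, baileyStep, mul_sum]
        refine sum_congr rfl fun r hr => ?_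
        rw [← mul_sum, ← mul_sum, hinner r hr]
        ring

/-- The weights of a chain of length `2 N` in which the steps `2 m` and `2 m + 1` together amount to
one step with weight `(a²)^x (q²)^{x²} c_m(x)`. -/
noncomputable def splitWeight (q a : ℂ) (c : ℕ → ℕ → ℂ) (m x : ℕ) : ℂ :=
  if Even m then a ^ x * q ^ (x ^ 2 + x) else a ^ x * q ^ (x ^ 2 - x) * c (m / 2) x

lemma chainSum_splitWeight (hQ : ∀ n, qPoch (q ^ 2) (q ^ 2) n ≠ 0) (a : ℂ) (c : ℕ → ℕ → ℂ)
    (g : ℕ → ℂ) (N : ℕ) :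
    chainSum (q ^ 2) (2 * N) (splitWeight q a c)
        (fun x => qPoch (-(a * q ^ 2)) (q ^ 2) x * g x) =
      fun L => qPoch (-(a * q ^ 2)) (q ^ 2) L *
        chainSum (q ^ 2) N (fun m x => (a ^ 2) ^ x * (q ^ 2) ^ x ^ 2 * c m x) g L := by
  induction N generalizing c with
  | zero => rfl
  | succ N ih =>
    have hshift : (fun m => splitWeight q a c (m + 1 + 1)) =
        splitWeight q a (fun m => c (m + 1)) := by
      funext m x
      simp only [splitWeight, add_assoc, one_add_one_eq_two, Nat.even_add, even_two, iff_true,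
        Nat.add_div_right m two_pos]
    have hmerge : ∀ x, a ^ x * q ^ (x ^ 2 + x) * splitWeight q a c 1 x =
        (a ^ 2) ^ x * (q ^ 2) ^ x ^ 2 * c 0 x := fun x => by
      rw [splitWeight, if_neg Nat.not_even_one]
      obtain ⟨y, hy⟩ := Nat.exists_eq_add_of_le (Nat.le_self_pow two_ne_zero x)
      rw [hy, Nat.add_sub_cancel_left]
      ring
    funext L
    change baileyStep (q ^ 2) (splitWeight q a c 0) (baileyStep (q ^ 2) (splitWeight q a c 1)
      (chainSum (q ^ 2) (2 * N) (fun m => splitWeight q a c (m + 1 + 1)) _)) L = _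
    rw [hshift, ih]
    exact (baileyStep_baileyStep_mul_qPoch hQ a _ _ L).trans (by simp only [hmerge]; rfl)

lemma chainSum_splitWeight_tailFactor (hQ : ∀ n, qPoch (q ^ 2) (q ^ 2) n ≠ 0)
    (ha : ∀ n, qPoch (-(a * q ^ 2)) (q ^ 2) n ≠ 0) (p N L : ℕ) :
    chainSum (q ^ 2) (2 * N) (splitWeight q a (tailFactor (q ^ 2) p))
        (fun x => 1 / qPoch (q ^ 2) (q ^ 2) x) L =
      qPoch (-(a * q ^ 2)) (q ^ 2) L * chainSum (q ^ 2) N (tailWeight (q ^ 2) (a ^ 2) p)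
        (fun x => (qPoch (-(a * q ^ 2)) (q ^ 2) x)⁻¹ / qPoch (q ^ 2) (q ^ 2) x) L := by
  have hcancel : (fun x => 1 / qPoch (q ^ 2) (q ^ 2) x) = fun x => qPoch (-(a * q ^ 2)) (q ^ 2) x *
      ((qPoch (-(a * q ^ 2)) (q ^ 2) x)⁻¹ / qPoch (q ^ 2) (q ^ 2) x) := by
    funext x
    rw [mul_div_assoc', mul_inv_cancel₀ (ha x)]
  rw [hcancel]
  exact congrFun (chainSum_splitWeight hQ a (tailFactor (q ^ 2) p) _ N) L

/-- The extension of an `N`-tuple by `0` to a sequence, in which the last factor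
`(Q;Q)_{t_{N-1} - t_N}` of a multisum is `(Q;Q)_{t_{N-1}}`. -/
def zeroExtend {N : ℕ} (s : Fin N → ℕ) (m : ℕ) : ℕ := if h : m < N then s ⟨m, h⟩ else 0

lemma zeroExtend_coe {N : ℕ} (s : Fin N → ℕ) (m : Fin N) : zeroExtend s m = s m :=
  dif_pos m.2

lemma zeroExtend_cons_zero {N : ℕ} (L : ℕ) (s : Fin N → ℕ) :
    zeroExtend (Fin.cons L s : Fin (N + 1) → ℕ) 0 = L := rfl

lemma zeroExtend_cons_succ {N : ℕ} (L : ℕ) (s : Fin N → ℕ) (m : ℕ) :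
    zeroExtend (Fin.cons L s : Fin (N + 1) → ℕ) (m + 1) = zeroExtend s m := by
  simp only [zeroExtend, add_lt_add_iff_right]
  rfl

lemma antitone_zeroExtend_iff {N : ℕ} {s : Fin N → ℕ} : Antitone (zeroExtend s) ↔ Antitone s := by
  refine ⟨fun h m n hmn => ?_, fun h m n hmn => ?_⟩
  · simpa only [zeroExtend_coe] using h hmn
  · simp only [zeroExtend]
    split_ifs with hn hm hm
    exacts [h hmn, absurd (hmn.trans_lt hn) hm, Nat.zero_le _, le_rfl]

/-- The product of kernels `1 / ((Q;Q)_{t_0-t_1} ⋯ (Q;Q)_{t_{N-1}})` of the tuple `t`. -/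
noncomputable def kernelProd (Q : ℂ) {N : ℕ} (t : Fin N → ℕ) : ℂ :=
  ∏ m ∈ range N, stepKernel Q (zeroExtend t m) (zeroExtend t (m + 1))

lemma kernelProd_cons {N : ℕ} (Q : ℂ) (L : ℕ) (s : Fin N → ℕ) :
    kernelProd Q (Fin.cons L s : Fin (N + 1) → ℕ) =
      stepKernel Q L (zeroExtend s 0) * kernelProd Q s := by
  simp only [kernelProd, prod_range_succ', zeroExtend_cons_succ, zeroExtend_cons_zero]
  exact mul_comm _ _

lemma antitone_of_kernelProd_ne_zero {N : ℕ} {t : Fin N → ℕ} (h : kernelProd Q t ≠ 0) :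
    Antitone t := by
  refine antitone_zeroExtend_iff.1 (antitone_nat_of_succ_le fun m => ?_)
  by_contra! hlt
  have hm : m < N := by
    by_contra hm
    exact hlt.not_ge ((dif_neg (by omega)).trans_le (Nat.zero_le _))
  exact prod_ne_zero_iff.1 h m (mem_range.2 hm) (stepKernel_of_lt hlt)

lemma finite_setOf_kernelProd_cons_ne_zero (Q : ℂ) (N L : ℕ) :
    {s : Fin N → ℕ | kernelProd Q (Fin.cons L s : Fin (N + 1) → ℕ) ≠ 0}.Finite :=
  (Set.finite_Iic fun _ => L).subset fun s hs m => by
    simpa only [Fin.cons_succ, Fin.cons_zero] using antitone_of_kernelProd_ne_zero hs m.succ.zero_le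

lemma chainSum_div_qPoch_eq_tsum (w : ℕ → ℕ → ℂ) (h : ℕ → ℂ) (N L : ℕ) :
    chainSum Q N w (fun x => h x / qPoch Q Q x) L =
      ∑' s : Fin N → ℕ, kernelProd Q (Fin.cons L s : Fin (N + 1) → ℕ) *
        ((∏ m ∈ range N, w m (zeroExtend s m)) *
          h (zeroExtend (Fin.cons L s : Fin (N + 1) → ℕ) N)) := by
  induction N generalizing w L with
  | zero =>
    simp [chainSum, kernelProd, zeroExtend, stepKernel_zero_right, div_eq_mul_inv,
      mul_comm]
  | succ N ih =>
    set F : (Fin (N + 1) → ℕ) → ℂ := fun s => kernelProd Q (Fin.cons L s : Fin (N + 2) → ℕ) *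
      ((∏ m ∈ range (N + 1), w m (zeroExtend s m)) *
        h (zeroExtend (Fin.cons L s : Fin (N + 2) → ℕ) (N + 1)))
    have hF : Summable F := summable_of_hasFiniteSupport <|
      (finite_setOf_kernelProd_cons_ne_zero Q (N + 1) L).subset fun s hs => left_ne_zero_of_mul hs
    have hcons : ∀ x (s : Fin N → ℕ), F (Fin.cons x s) = stepKernel Q L x * w 0 x *
        (kernelProd Q (Fin.cons x s : Fin (N + 1) → ℕ) *
          ((∏ m ∈ range N, w (m + 1) (zeroExtend s m)) *
            h (zeroExtend (Fin.cons x s : Fin (N + 1) → ℕ) N))) := fun x s => by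
      simp only [F, kernelProd_cons Q L, prod_range_succ', zeroExtend_cons_succ,
        zeroExtend_cons_zero]
      ring
    calc _ = ∑ x ∈ range (L + 1), ∑' s : Fin N → ℕ, F (Fin.cons x s) := by
          simp only [chainSum, baileyStep, ih, hcons, tsum_mul_left]
      _ = ∑' x, ∑' s : Fin N → ℕ, F (Fin.cons x s) := by
          refine (tsum_eq_sum fun x hx => ?_).symm
          simp only [hcons, stepKernel_of_lt (show L < x by simpa using hx), zero_mul, tsum_zero]
      _ = ∑' s, F s := by
          let e := Fin.consEquiv fun _ : Fin (N + 1) => ℕ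
          rw [← e.tsum_eq F]
          exact ((e.summable_iff.2 hF).tsum_prod).symm

end ChainSums

section Limits

open Finset Filter Topology

variable {Q A x q : ℂ}

lemma summable_norm_neg_mul_pow (hQ : ‖Q‖ < 1) (x : ℂ) :
    Summable fun j : ℕ => ‖-(x * Q ^ j)‖ := by
  simp only [norm_neg, norm_mul, norm_pow]
  exact (summable_geometric_of_lt_one (norm_nonneg _) hQ).mul_left _

lemma tendsto_qPoch (hQ : ‖Q‖ < 1) (x : ℂ) : Tendsto (qPoch x Q) atTop (𝓝 (qPochInf x Q)) := by
  have h := multipliable_one_add_of_summable (summable_norm_neg_mul_pow hQ x)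
  simp only [← sub_eq_add_neg] at h
  exact h.hasProd.tendsto_prod_nat

lemma qPochInf_ne_zero (hQ : ‖Q‖ < 1) (hx : ∀ n, qPoch x Q n ≠ 0) : qPochInf x Q ≠ 0 := by
  simpa only [qPochInf, ← sub_eq_add_neg] using tprod_one_add_ne_zero_of_summable
    (fun j => by simpa only [← sub_eq_add_neg] using one_sub_mul_pow_ne_zero hx j)
    (summable_norm_neg_mul_pow hQ x)

lemma qPoch_self_ne_zero (hQ : ‖Q‖ < 1) : ∀ n, qPoch Q Q n ≠ 0 :=
  qPoch_ne_zero fun j h => by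
    have hlt : ‖Q * Q ^ j‖ < 1 := by
      rw [← pow_succ', norm_pow]
      exact pow_lt_one₀ (norm_nonneg _) hQ j.succ_ne_zero
    rw [h, norm_one] at hlt
    exact hlt.false

lemma tendsto_inv_qPoch (hQ : ‖Q‖ < 1) (hx : ∀ n, qPoch x Q n ≠ 0) :
    Tendsto (fun n => (qPoch x Q n)⁻¹) atTop (𝓝 (qPochInf x Q)⁻¹) :=
  (tendsto_qPoch hQ x).inv₀ (qPochInf_ne_zero hQ hx)

lemma exists_norm_stepKernel_le (hQ : ‖Q‖ < 1) : ∃ C, ∀ L m, ‖stepKernel Q L m‖ ≤ C := by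
  obtain ⟨C, hC⟩ := (tendsto_inv_qPoch hQ (qPoch_self_ne_zero hQ)).norm.bddAbove_range
  refine ⟨C, fun L m => ?_⟩
  obtain h | h := le_or_gt m L
  · exact stepKernel_of_le (Q := Q) h ▸ hC (Set.mem_range_self _)
  · rw [stepKernel_of_lt h, norm_zero]
    exact (norm_nonneg _).trans (hC (Set.mem_range_self 0))

lemma exists_norm_qPoch_mul_stepKernel_le (hQ : ‖Q‖ < 1) :
    ∃ C, ∀ L m, ‖qPoch Q Q L * stepKernel Q L m‖ ≤ C := by
  obtain ⟨C, hC⟩ := exists_norm_stepKernel_le hQ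
  obtain ⟨D, hD⟩ := (tendsto_qPoch hQ Q).norm.bddAbove_range
  exact ⟨D * C, fun L m => norm_mul_le_of_le (hD (Set.mem_range_self L)) (hC L m)⟩

lemma tendsto_qPoch_mul_stepKernel (hQ : ‖Q‖ < 1) (m : ℕ) :
    Tendsto (fun L => qPoch Q Q L * stepKernel Q L m) atTop (𝓝 1) := by
  have hne := qPoch_self_ne_zero hQ
  rw [← mul_inv_cancel₀ (qPochInf_ne_zero hQ hne)]
  refine ((tendsto_qPoch hQ Q).mul
    ((tendsto_inv_qPoch hQ hne).comp (tendsto_sub_atTop_nat m))).congr' ?_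
  filter_upwards [eventually_ge_atTop m] with L hL
  rw [stepKernel_of_le hL, Function.comp_apply]

lemma IsBaileyPair.tendsto {α β : ℕ → ℂ} (h : IsBaileyPair Q A α β) (hQ : ‖Q‖ < 1)
    (hA : ∀ n, qPoch (A * Q) Q n ≠ 0) (hα : Summable α) :
    Tendsto (fun L => qPoch Q Q L * β L) atTop (𝓝 ((qPochInf (A * Q) Q)⁻¹ * ∑' r, α r)) := by
  have hinv := tendsto_inv_qPoch hQ hA
  obtain ⟨C, hC⟩ := exists_norm_qPoch_mul_stepKernel_le hQ
  obtain ⟨D, hD⟩ := hinv.norm.bddAbove_range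
  have hβ : ∀ L, qPoch Q Q L * β L =
      ∑' r, qPoch Q Q L * stepKernel Q L r * (qPoch (A * Q) Q (L + r))⁻¹ * α r := fun L => by
    rw [h L, mul_sum, tsum_eq_sum fun r hr => ?_]
    · exact sum_congr rfl fun r _ => by rw [pairKernel]; ring
    · rw [stepKernel_of_lt (by simpa using hr), mul_zero, zero_mul, zero_mul]
  simp only [hβ, ← tsum_mul_left]
  refine tendsto_tsum_of_dominated_convergence (hα.norm.mul_left (C * D)) (fun r => ?_)
    (.of_forall fun L r => ?_)
  · simpa only [one_mul, Function.comp_def] using ((tendsto_qPoch_mul_stepKernel hQ r).mul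
      (hinv.comp (tendsto_add_atTop_nat r))).mul_const (α r)
  · exact norm_mul_le_of_le
      (norm_mul_le_of_le (hC L r) (hD (Set.mem_range_self (L + r)))) le_rfl

lemma summable_prod_fin {b : ℕ → ℝ} (hb : Summable b) (hb0 : ∀ x, 0 ≤ b x) (N : ℕ) :
    Summable fun s : Fin N → ℕ => ∏ i, b (s i) := by
  induction N with
  | zero => exact .of_finite
  | succ N ih =>
    rw [← (Fin.consEquiv fun _ => ℕ).summable_iff]
    refine (hb.mul_of_nonneg ih hb0 fun s => prod_nonneg fun i _ => hb0 _).congr fun c => ?_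
    simp only [Function.comp_apply, Fin.consEquiv_apply, Fin.prod_univ_succ, Fin.cons_zero,
      Fin.cons_succ]

lemma kernelProd_of_antitone {N : ℕ} {s : Fin N → ℕ} (hs : Antitone s) :
    kernelProd Q s =
      (∏ m ∈ range N, qPoch Q Q (zeroExtend s m - zeroExtend s (m + 1)))⁻¹ := by
  rw [kernelProd, ← prod_inv_distrib]
  exact prod_congr rfl fun m _ => stepKernel_of_le (antitone_zeroExtend_iff.2 hs m.le_succ)

lemma tsum_kernelProd_mul (Q : ℂ) {N : ℕ} (W : (Fin N → ℕ) → ℂ) :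
    ∑' s, kernelProd Q s * W s = ∑' s : {s : Fin N → ℕ // Antitone s},
      W s / ∏ m ∈ range N, qPoch Q Q (zeroExtend s.1 m - zeroExtend s.1 (m + 1)) := by
  have hsupport : (Function.support fun s => kernelProd Q s * W s) ⊆ {s | Antitone s} :=
    fun s hs => antitone_of_kernelProd_ne_zero (left_ne_zero_of_mul hs)
  rw [← tsum_subtype_eq_of_support_subset hsupport]
  exact tsum_congr fun s => by rw [kernelProd_of_antitone s.2, div_eq_inv_mul]

lemma tendsto_qPoch_mul_chainSum {w : ℕ → ℕ → ℂ} {h : ℕ → ℂ} {b : ℕ → ℝ} {d : ℝ}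
    (hQ : ‖Q‖ < 1) (hb : Summable b) (hw : ∀ m x, ‖w m x‖ ≤ b x) (hh : ∀ x, ‖h x‖ ≤ d) (N : ℕ) :
    Tendsto (fun L => qPoch Q Q L * chainSum Q (N + 1) w (fun x => h x / qPoch Q Q x) L) atTop
      (𝓝 (∑' s : {s : Fin (N + 1) → ℕ // Antitone s},
        (∏ m ∈ range (N + 1), w m (zeroExtend s.1 m)) * h (zeroExtend s.1 N) /
          ∏ m ∈ range (N + 1), qPoch Q Q (zeroExtend s.1 m - zeroExtend s.1 (m + 1)))) := by
  obtain ⟨C, hC⟩ := exists_norm_qPoch_mul_stepKernel_le hQ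
  obtain ⟨D, hD⟩ := exists_norm_stepKernel_le hQ
  set W : (Fin (N + 1) → ℕ) → ℂ := fun s =>
    (∏ m ∈ range (N + 1), w m (zeroExtend s m)) * h (zeroExtend s N)
  have hW : ∀ s, ‖W s‖ ≤ (∏ i, b (s i)) * d := fun s => by
    refine norm_mul_le_of_le ?_ (hh _)
    rw [prod_range, norm_prod]
    exact prod_le_prod (fun _ _ => norm_nonneg _) fun m _ => (hw m _).trans_eq (by
      rw [zeroExtend_coe])
  have hkernel : ∀ s : Fin (N + 1) → ℕ, ‖kernelProd Q s‖ ≤ D ^ (N + 1) := fun s => by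
    rw [kernelProd, norm_prod]
    exact (prod_le_prod (fun _ _ => norm_nonneg _) fun m _ => hD _ _).trans_eq (by simp)
  have hchain : ∀ L, qPoch Q Q L * chainSum Q (N + 1) w (fun x => h x / qPoch Q Q x) L =
      ∑' s : Fin (N + 1) → ℕ,
        qPoch Q Q L * stepKernel Q L (zeroExtend s 0) * (kernelProd Q s * W s) := fun L => by
    rw [chainSum_div_qPoch_eq_tsum, ← tsum_mul_left]
    refine tsum_congr fun s => ?_
    rw [kernelProd_cons, zeroExtend_cons_succ]
    ring
  simp only [hchain]
  rw [← tsum_kernelProd_mul Q W]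
  refine tendsto_tsum_of_dominated_convergence
    (((summable_prod_fin hb (fun x => (norm_nonneg _).trans (hw 0 x)) (N + 1)).mul_right d).mul_left
      (C * D ^ (N + 1))) (fun s => ?_) (.of_forall fun L s => ?_)
  · simpa only [one_mul] using (tendsto_qPoch_mul_stepKernel hQ _).mul_const (kernelProd Q s * W s)
  · exact (norm_mul_le_of_le (hC _ _) (norm_mul_le_of_le (hkernel s) (hW s))).trans_eq
      (mul_assoc _ _ _).symm

lemma norm_sq_lt_one (hq : ‖q‖ < 1) : ‖q ^ 2‖ < 1 := by
  rw [norm_pow]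
  exact pow_lt_one₀ (norm_nonneg q) hq two_ne_zero

lemma summable_pow_mul_pow_sq_sub (hq : ‖q‖ < 1) (z : ℂ) :
    Summable fun x : ℕ => z ^ x * q ^ (x ^ 2 - x) := by
  refine Summable.of_norm_bounded_eventually_nat (g := fun x : ℕ => (1 / 2 : ℝ) ^ x)
    (summable_geometric_of_lt_one (by norm_num) (by norm_num)) ?_
  have hzero : Tendsto (fun x : ℕ => z * q ^ (x - 1)) atTop (𝓝 0) := by
    simpa only [mul_zero, Function.comp_def] using
      ((tendsto_pow_atTop_nhds_zero_of_norm_lt_one hq).comp (tendsto_sub_atTop_nat 1)).const_mul z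
  filter_upwards [hzero.norm.eventually_le_const (show ‖(0 : ℂ)‖ < 1 / 2 by norm_num)] with x hx
  calc ‖z ^ x * q ^ (x ^ 2 - x)‖ = ‖z * q ^ (x - 1)‖ ^ x := by
        rw [← norm_pow, mul_pow, ← pow_mul, Nat.sub_mul, one_mul, sq]
    _ ≤ (1 / 2) ^ x := by gcongr

lemma summable_pow_mul_pow_sq (hq : ‖q‖ < 1) (z : ℂ) :
    Summable fun x : ℕ => z ^ x * q ^ x ^ 2 := by
  refine (summable_pow_mul_pow_sq_sub hq (z * q)).congr fun x => ?_
  rw [mul_pow, mul_assoc, ← pow_add, Nat.add_sub_cancel' (Nat.le_self_pow two_ne_zero x)]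

end Limits

section Evaluation

open Finset Filter Topology

variable {Q A q a : ℂ}

lemma norm_tailFactor_le_one (hQ : ‖Q‖ < 1) (p m x : ℕ) : ‖tailFactor Q p m x‖ ≤ 1 := by
  rw [tailFactor]
  split_ifs
  · exact norm_one.le
  · rw [norm_pow]
    exact pow_le_one₀ (norm_nonneg _) hQ.le

lemma prod_tailFactor (Q : ℂ) (p N : ℕ) (t : ℕ → ℕ) :
    ∏ m ∈ range N, tailFactor Q p m (t m) = Q ^ ∑ m ∈ Ico p N, t m := by
  have hfilter : {m ∈ range N | ¬m < p} = Ico p N := by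
    ext m
    simp only [mem_filter, mem_range, mem_Ico, not_lt, and_comm]
  simp only [tailFactor, prod_ite, prod_const_one, one_mul, hfilter, prod_pow_eq_pow_sum]

lemma prod_tailWeight (Q A : ℂ) (p N : ℕ) (t : ℕ → ℕ) :
    ∏ m ∈ range N, tailWeight Q A p m (t m) =
      A ^ (∑ m ∈ range N, t m) * Q ^ (∑ m ∈ range N, t m ^ 2 + ∑ m ∈ Ico p N, t m) := by
  simp only [tailWeight, prod_mul_distrib, prod_pow_eq_pow_sum, prod_tailFactor, pow_add, mul_assoc]

lemma prod_splitWeight (q a : ℂ) (c : ℕ → ℕ → ℂ) {t : ℕ → ℕ} (ht : Antitone t) (N : ℕ) :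
    ∏ m ∈ range (2 * N), splitWeight q a c m (t m) =
      a ^ (∑ m ∈ range (2 * N), t m) *
        q ^ (∑ m ∈ range (2 * N), t m ^ 2 + ∑ m ∈ range N, (t (2 * m) - t (2 * m + 1))) *
        ∏ m ∈ range N, c m (t (2 * m + 1)) := by
  induction N with
  | zero => simp
  | succ N ih =>
    have heven : splitWeight q a c (2 * N) = fun x => a ^ x * q ^ (x ^ 2 + x) := by
      funext x
      rw [splitWeight, if_pos (even_two_mul N)]
    have hodd : splitWeight q a c (2 * N + 1) = fun x => a ^ x * q ^ (x ^ 2 - x) * c N x := by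
      funext x
      rw [splitWeight, if_neg (by simp), show (2 * N + 1) / 2 = N by omega]
    obtain ⟨d, hd⟩ := Nat.exists_eq_add_of_le (ht (2 * N).le_succ)
    obtain ⟨e, he⟩ := Nat.exists_eq_add_of_le (Nat.le_self_pow two_ne_zero (t (2 * N + 1)))
    simp only [show 2 * (N + 1) = 2 * N + 1 + 1 by ring, prod_range_succ, sum_range_succ, ih, heven,
      hodd]
    rw [Nat.succ_eq_add_one] at hd
    rw [he, hd, Nat.add_sub_cancel_left, Nat.add_sub_cancel_left]
    ring

lemma tendsto_chainSum_tailWeight {B : ℂ} (hQ : ‖Q‖ < 1) (hB : ∀ n, qPoch B Q n ≠ 0) (A : ℂ)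
    (p N : ℕ) :
    Tendsto (fun L => qPoch Q Q L * chainSum Q (N + 1) (tailWeight Q A p)
        (fun x => (qPoch B Q x)⁻¹ / qPoch Q Q x) L) atTop
      (𝓝 (∑' s : {s : Fin (N + 1) → ℕ // Antitone s},
        A ^ (∑ m ∈ range (N + 1), zeroExtend s.1 m) *
          Q ^ (∑ m ∈ range (N + 1), zeroExtend s.1 m ^ 2 +
            ∑ m ∈ Ico p (N + 1), zeroExtend s.1 m) /
          ((∏ m ∈ range (N + 1), qPoch Q Q (zeroExtend s.1 m - zeroExtend s.1 (m + 1))) *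
            qPoch B Q (zeroExtend s.1 N)))) := by
  have hw : ∀ m x, ‖tailWeight Q A p m x‖ ≤ ‖A ^ x * Q ^ x ^ 2‖ := fun m x =>
    (norm_mul_le_of_le le_rfl (norm_tailFactor_le_one hQ p m x)).trans_eq (mul_one _)
  obtain ⟨d, hd⟩ := (tendsto_inv_qPoch hQ hB).norm.bddAbove_range
  convert tendsto_qPoch_mul_chainSum hQ (summable_pow_mul_pow_sq hQ A).norm hw
    (fun x => hd (Set.mem_range_self x)) N using 3
  funext s
  rw [prod_tailWeight, ← div_eq_mul_inv, div_div, mul_comm (qPoch _ _ _)]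

lemma tendsto_chainSum_splitWeight (hq : ‖q‖ < 1) (a : ℂ) (p N : ℕ) :
    Tendsto (fun L => qPoch (q ^ 2) (q ^ 2) L * chainSum (q ^ 2) (2 * (N + 1))
        (splitWeight q a (tailFactor (q ^ 2) p)) (fun x => 1 / qPoch (q ^ 2) (q ^ 2) x) L) atTop
      (𝓝 (∑' s : {s : Fin (2 * (N + 1)) → ℕ // Antitone s},
        a ^ (∑ m ∈ range (2 * (N + 1)), zeroExtend s.1 m) *
          q ^ (∑ m ∈ range (2 * (N + 1)), zeroExtend s.1 m ^ 2 +
            2 * ∑ m ∈ Ico p (N + 1), zeroExtend s.1 (2 * m + 1) +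
            ∑ m ∈ range (N + 1), (zeroExtend s.1 (2 * m) - zeroExtend s.1 (2 * m + 1))) /
          ∏ m ∈ range (2 * (N + 1)),
            qPoch (q ^ 2) (q ^ 2) (zeroExtend s.1 m - zeroExtend s.1 (m + 1)))) := by
  have hq2 := norm_sq_lt_one hq
  have hw : ∀ m x, ‖splitWeight q a (tailFactor (q ^ 2) p) m x‖ ≤ ‖a ^ x * q ^ (x ^ 2 - x)‖ :=
    fun m x => by
      rw [splitWeight]
      split_ifs
      · rw [norm_mul, norm_mul, norm_pow q, norm_pow q]
        exact mul_le_mul_of_nonneg_left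
          (pow_le_pow_of_le_one (norm_nonneg _) hq.le (by omega)) (norm_nonneg _)
      · exact (norm_mul_le_of_le le_rfl (norm_tailFactor_le_one hq2 p _ x)).trans_eq (mul_one _)
  have hsummand : ∀ s : {s : Fin (2 * (N + 1)) → ℕ // Antitone s},
      a ^ (∑ m ∈ range (2 * (N + 1)), zeroExtend s.1 m) *
          q ^ (∑ m ∈ range (2 * (N + 1)), zeroExtend s.1 m ^ 2 +
            2 * ∑ m ∈ Ico p (N + 1), zeroExtend s.1 (2 * m + 1) +
            ∑ m ∈ range (N + 1), (zeroExtend s.1 (2 * m) - zeroExtend s.1 (2 * m + 1))) =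
        (∏ m ∈ range (2 * (N + 1)),
          splitWeight q a (tailFactor (q ^ 2) p) m (zeroExtend s.1 m)) * 1 := fun s => by
    rw [prod_splitWeight q a _ (antitone_zeroExtend_iff.2 s.2),
      prod_tailFactor (q ^ 2) p (N + 1) fun m => zeroExtend s.1 (2 * m + 1)]
    ring
  simp only [hsummand]
  exact tendsto_qPoch_mul_chainSum hq2 (summable_pow_mul_pow_sq_sub hq a).norm hw
    (fun _ => norm_one.le) (2 * N + 1)

lemma summable_pow_mul_seedCoeff (hQ : ‖Q‖ < 1) (A a : ℂ) (p j : ℕ) :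
    Summable fun r => (A ^ r * Q ^ r ^ 2) ^ p *
      (((A * Q) ^ r * Q ^ r ^ 2) ^ j * seedCoeff Q a r) := by
  have hzero : ∀ z : ℂ, Tendsto (fun r => z ^ r * Q ^ r ^ 2) atTop (𝓝 0) := fun z =>
    (summable_pow_mul_pow_sq hQ z).tendsto_atTop_zero
  have hbounded := ((((hzero A).pow p).mul ((hzero (A * Q)).pow j)).mul
    ((tendsto_qPoch hQ (a ^ 2 * Q)).mul
      (tendsto_inv_qPoch hQ (qPoch_self_ne_zero hQ)))).isBigO_one ℂ
  refine summable_of_isBigO_nat (summable_pow_mul_pow_sq hQ (-a)).norm ?_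
  refine (hbounded.mul (Asymptotics.isBigO_refl (fun r : ℕ => (-a) ^ r * Q ^ r ^ 2) _)).norm_right
    |>.congr (fun r => ?_) (fun r => by rw [one_mul])
  rw [seedCoeff]
  ring

lemma hasSum_pow_mul_lowerBase (hQ : ‖Q‖ < 1) (p : ℕ) {γ : ℕ → ℂ}
    (hγ : Summable fun r => (A ^ r * Q ^ r ^ 2) ^ p * γ r) :
    HasSum (fun r => (A ^ r * Q ^ r ^ 2) ^ p * lowerBase Q A γ r)
      (∑' r, (A ^ r * Q ^ r ^ 2) ^ p * γ r * (1 - (A * Q ^ (2 * r + 1)) ^ (p + 1))) := by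
  set δ : ℕ → ℂ := fun r => (A ^ r * Q ^ r ^ 2) ^ p * γ r
  have hratio : Tendsto (fun r : ℕ => (A * Q ^ (2 * r + 1)) ^ (p + 1)) atTop
      (𝓝 ((A * 0) ^ (p + 1))) :=
    (((tendsto_pow_atTop_nhds_zero_of_norm_lt_one hQ).comp
      (tendsto_atTop_mono (fun r => show r ≤ 2 * r + 1 by omega) tendsto_id)).const_mul A).pow _
  have hshift : Summable fun r => δ r * (A * Q ^ (2 * r + 1)) ^ (p + 1) :=
    summable_of_isBigO_nat hγ.norm <| by
      simpa only [mul_one] using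
        (Asymptotics.isBigO_refl δ atTop).norm_right.mul (hratio.isBigO_one ℝ)
  have hsucc : ∀ r, (A ^ (r + 1) * Q ^ (r + 1) ^ 2) ^ p * lowerBase Q A γ (r + 1) =
      δ (r + 1) - δ r * (A * Q ^ (2 * r + 1)) ^ (p + 1) := fun r => by
    simp only [lowerBase, δ]
    ring
  rw [← hasSum_nat_add_iff' 1]
  simp only [hsucc, mul_sub, mul_one]
  convert ((hasSum_nat_add_iff' 1).2 hγ.hasSum).sub hshift.hasSum using 1
  rw [hγ.tsum_sub hshift, sum_range_one, sum_range_one, lowerBase, sub_right_comm]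

lemma tendsto_chainSum_tailWeight_seed (hQ : ‖Q‖ < 1) (hA : ∀ n, qPoch (a ^ 2 * Q) Q n ≠ 0)
    (p j : ℕ) :
    Tendsto (fun L => qPoch Q Q L * chainSum Q (p + j) (tailWeight Q (a ^ 2) p)
        (fun x => (qPoch (-(a * Q)) Q x)⁻¹ / qPoch Q Q x) L) atTop
      (𝓝 ((qPochInf (a ^ 2 * Q) Q)⁻¹ * ∑' r, ((a ^ 2) ^ r * Q ^ r ^ 2) ^ p *
        (((a ^ 2 * Q) ^ r * Q ^ r ^ 2) ^ j * seedCoeff Q a r) *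
          (1 - (a ^ 2 * Q ^ (2 * r + 1)) ^ (p + 1)))) := by
  have hQne := qPoch_self_ne_zero hQ
  have hAQ : ∀ n, qPoch (a ^ 2 * Q * Q) Q n ≠ 0 := by
    simpa only [pow_one] using qPoch_mul_pow_ne_zero hA 1
  have hconst := (isBaileyPair_seed hQne hA).chainSum_const hQne hAQ j
  simp only [mul_left_comm (_ ^ j)] at hconst
  have hα := hasSum_pow_mul_lowerBase hQ p (summable_pow_mul_seedCoeff hQ (a ^ 2) a p j)
  rw [← hα.tsum_eq]
  exact ((hconst.lowerBase hQne hA).chainSum_tailWeight hQne hA p).tendsto hQ hA hα.summable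

end Evaluation

/-- Theorem 5.2 (with `q` replaced by `q²` and `a` by `a²`).  In the second sum the tuple
encodes `s_1 ≥ ⋯ ≥ s_{k-1} ≥ 0` via `s_m = t (m-1)` (with `s_k = 0`), and in the third sum
`s_1 ≥ ⋯ ≥ s_{2k-2} ≥ 0` via `s_m = t (m-1)` (with `s_{2k-1} = 0`); there
`S = s_1 - s_2 + s_3 - s_4 + ⋯ + s_{2k-3} - s_{2k-2}` is written as
`∑_{m<k-1} (t (2m) - t (2m+1))`, where the subtractions are exact by antitonicity. -/
theorem theorem_5_2 (q a : ℂ) (h0 : 0 < ‖q‖) (h1 : ‖q‖ < 1)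
    (ha : ∀ m : ℕ, 1 ≤ m → a ^ 2 * q ^ (2 * m) ≠ 1)
    (k i : ℕ) (hk : 2 ≤ k) (hi1 : 1 ≤ i) (hik : i ≤ k) :
    (qPochInf (-(a * q ^ 2)) (q ^ 2) / qPochInf (a ^ 2 * q ^ 2) (q ^ 2) *
      ∑' n : ℕ, (-1 : ℂ) ^ n * a ^ ((2 * k - 1) * n) *
        q ^ (2 * k * n ^ 2 + (2 * k - 2 * i) * n) *
        (1 - a ^ (2 * i) * q ^ (2 * i * (2 * n + 1))) *
        qPoch (a ^ 2 * q ^ 2) (q ^ 2) n / qPoch (q ^ 2) (q ^ 2) n) =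
      (qPochInf (-(a * q ^ 2)) (q ^ 2) *
        ∑' s : {s : Fin (k - 1) → ℕ // Antitone s},
          (let t : ℕ → ℕ := fun m => if h : m < k - 1 then s.1 ⟨m, h⟩ else 0
           a ^ (2 * ∑ m ∈ Finset.range (k - 1), t m) *
             q ^ (2 * ∑ m ∈ Finset.range (k - 1), (t m) ^ 2 +
                  2 * ∑ m ∈ Finset.Ico (i - 1) (k - 1), t m) /
             ((∏ m ∈ Finset.range (k - 1), qPoch (q ^ 2) (q ^ 2) (t m - t (m + 1))) *
               qPoch (-(a * q ^ 2)) (q ^ 2) (t (k - 2))))) ∧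
    (qPochInf (-(a * q ^ 2)) (q ^ 2) *
        ∑' s : {s : Fin (k - 1) → ℕ // Antitone s},
          (let t : ℕ → ℕ := fun m => if h : m < k - 1 then s.1 ⟨m, h⟩ else 0
           a ^ (2 * ∑ m ∈ Finset.range (k - 1), t m) *
             q ^ (2 * ∑ m ∈ Finset.range (k - 1), (t m) ^ 2 +
                  2 * ∑ m ∈ Finset.Ico (i - 1) (k - 1), t m) /
             ((∏ m ∈ Finset.range (k - 1), qPoch (q ^ 2) (q ^ 2) (t m - t (m + 1))) *
               qPoch (-(a * q ^ 2)) (q ^ 2) (t (k - 2))))) =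
      (∑' s : {s : Fin (2 * k - 2) → ℕ // Antitone s},
        (let t : ℕ → ℕ := fun m => if h : m < 2 * k - 2 then s.1 ⟨m, h⟩ else 0
         a ^ (∑ m ∈ Finset.range (2 * k - 2), t m) *
           q ^ (∑ m ∈ Finset.range (2 * k - 2), (t m) ^ 2 +
                2 * ∑ m ∈ Finset.Ico (i - 1) (k - 1), t (2 * m + 1) +
                ∑ m ∈ Finset.range (k - 1), (t (2 * m) - t (2 * m + 1))) /
           ∏ m ∈ Finset.range (2 * k - 2), qPoch (q ^ 2) (q ^ 2) (t m - t (m + 1)))) := by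
  obtain ⟨N, rfl⟩ := Nat.exists_eq_add_of_le' hk
  obtain ⟨p, rfl⟩ := Nat.exists_eq_add_of_le' hi1
  obtain ⟨j, hj⟩ : ∃ j, N + 1 = p + j := Nat.exists_eq_add_of_le (by omega)
  have hq := norm_sq_lt_one h1
  have hA : ∀ n, qPoch (a ^ 2 * q ^ 2) (q ^ 2) n ≠ 0 :=
    qPoch_ne_zero fun m hm => ha (m + 1) m.succ_pos (by rw [← hm]; ring)
  have hB := qPoch_neg_mul_ne_zero hA
  have htwo := tendsto_chainSum_tailWeight hq hB (a ^ 2) p N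
  simp only [← pow_mul, mul_add] at htwo
  have hone := tendsto_chainSum_tailWeight_seed hq hA p j
  rw [← hj] at hone
  have hthree := (tendsto_chainSum_splitWeight h1 a p N).congr fun L => by
    rw [chainSum_splitWeight_tailFactor (qPoch_self_ne_zero hq) hB, mul_left_comm]
  refine ⟨?_, tendsto_nhds_unique ((tendsto_qPoch hq _).mul htwo) hthree⟩
  refine Eq.trans ?_ (congrArg _ (tendsto_nhds_unique hone htwo))
  rw [div_eq_mul_inv, mul_assoc]
  congr 2
  refine tsum_congr fun r => ?_
  rw [seedCoeff, show 2 * (N + 2) - 1 = 2 * (p + j) + 1 by omega,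
    show 2 * (N + 2) - 2 * (p + 1) = 2 * j by omega, neg_pow, show N + 2 = p + j + 1 by omega]
  ring
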